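/- arXiv:1904.05655 — 2 statements merged into one kernel-verified Lean document; each statement's English description precedes it below -/
import Mathlib

section
/- For every real coupling ḡ ≠ 0 and every real mass parameter m̄² ≥ −1, the denominator of the melonic anomalous dimension is strictly positive: (1+m̄²)²·Ω(ḡ,m̄²) + ((2+m̄²)/3)·ḡ²·π⁴ > 0, where Ω(ḡ,m̄²) := (1+m̄²)² − π²ḡ. In particular, the anomalous dimension η₀ of the unconstrained melonic flow has no singularity in the region m̄² ≥ −1, ḡ ≠ 0 (the singularity line of truncation schemes is displaced below m̄² = −1). -/
open Real

/-- `Ω(ḡ, m̄²) := (1 + m̄²)² − π²ḡ`. -/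
noncomputable def Omega (g m : ℝ) : ℝ := (1 + m) ^ 2 - π ^ 2 * g

theorem mul_sub_add_mul_sq_pos {R : Type*} [CommRing R] [LinearOrder R] [IsStrictOrderedRing R]
    {a b c : R} (hc : 1 < 4 * c) (hab : a ≠ 0 ∨ b ≠ 0) : 0 < a * (a - b) + c * b ^ 2 := by
  rcases eq_or_ne b 0 with rfl | hb
  · have ha : a ≠ 0 := hab.resolve_right (not_not.mpr rfl)
    simpa using ha
  · have complete_square :
        4 * (a * (a - b) + c * b ^ 2) = (2 * a - b) ^ 2 + (4 * c - 1) * b ^ 2 := by ring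
    have sum_pos : 0 < (2 * a - b) ^ 2 + (4 * c - 1) * b ^ 2 :=
      add_pos_of_nonneg_of_pos (sq_nonneg _) (mul_pos (sub_pos.mpr hc) (sq_pos_of_ne_zero hb))
    exact pos_of_mul_pos_right (complete_square ▸ sum_pos) zero_le_four

theorem den_eta0_eq (g m : ℝ) :
    (1 + m) ^ 2 * Omega g m + ((2 + m) / 3) * g ^ 2 * π ^ 4 =
      (1 + m) ^ 2 * ((1 + m) ^ 2 - π ^ 2 * g) + (2 + m) / 3 * (π ^ 2 * g) ^ 2 := by
  rw [Omega]
  ring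

-- The bound on `m` says exactly that `(2 + m) / 3 > 1 / 4`, i.e. that the denominator is positive
-- definite as a quadratic form in `(1 + m) ^ 2` and `π ^ 2 * g`.
theorem den_eta0_pos_general {g m : ℝ} (hgm : g ≠ 0 ∨ m ≠ -1) (hm : -5 / 4 < m) :
    0 < (1 + m) ^ 2 * Omega g m + ((2 + m) / 3) * g ^ 2 * π ^ 4 := by
  rw [den_eta0_eq]
  refine mul_sub_add_mul_sq_pos (by linarith) (hgm.symm.imp (fun hm' => ?_) fun hg => ?_)
  · exact pow_ne_zero 2 fun h => hm' (eq_neg_of_add_eq_zero_right h)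
  · exact mul_ne_zero (pow_ne_zero 2 pi_ne_zero) hg

/-- The denominator of the unconstrained melonic anomalous dimension `η₀` is strictly
positive for every coupling `ḡ ≠ 0` and mass `m̄² ≥ −1`: so `η₀` has no singularity in
this region. -/
theorem den_eta0_pos (g m : ℝ) (hg : g ≠ 0) (hm : -1 ≤ m) :
    0 < (1 + m) ^ 2 * Omega g m + ((2 + m) / 3) * g ^ 2 * π ^ 4 :=
  den_eta0_pos_general (.inl hg) (by linarith)
end

section
/- The unconstrained melonic renormalization group flow admits a non-Gaussian fixed point: there exist real numbers ḡ* and m̄²* with 0 < ḡ* < 0.01 and −0.6 < m̄²* < −0.5 such that β_m(ḡ*,m̄²*) = 0 and β_g(ḡ*,m̄²*) = 0 (numerically (ḡ*, m̄²*) ≈ (0.003, −0.55)). -/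
open Real

/-- The unconstrained melonic anomalous dimension
`η₀(ḡ, m̄²) = 4ḡπ²((1+m̄²)² − (ḡπ²/2)(2+m̄²)) / ((1+m̄²)²Ω + ((2+m̄²)/3)ḡ²π⁴)`. -/
noncomputable def eta0 (g m : ℝ) : ℝ :=
  4 * g * π ^ 2 * ((1 + m) ^ 2 - (g * π ^ 2 / 2) * (2 + m)) /
    ((1 + m) ^ 2 * Omega g m + ((2 + m) / 3) * g ^ 2 * π ^ 4)

/-- `β_m` for the unconstrained melonic flow. -/
noncomputable def betaM0 (g m : ℝ) : ℝ :=
  -(2 + eta0 g m) * m - 10 * π ^ 2 * g * (1 + eta0 g m / 6) / (1 + m) ^ 2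

/-- `β_g` for the unconstrained melonic flow. -/
noncomputable def betaG0 (g m : ℝ) : ℝ :=
  -2 * eta0 g m * g + 4 * g ^ 2 * π ^ 2 * (1 + eta0 g m / 6) / (1 + m) ^ 3 *
    (1 - (π ^ 2 * g / 2) * (1 / (1 + m) ^ 2 + (1 + 1 / (1 + m))))

/-!
Write `y = 1 + m` and measure the coupling by `t = π² g / y²`. In these variables
`1 + η₀ / 6 = (1 - t / 3) / D` with `D = 1 - t + (1 + y) t² / 3`, so each beta function becomes a
polynomial in `(t, y)` times a factor that is nonzero for `t, y > 0`. The polynomial for `β_m` is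
quadratic in `t`; its smaller root `t(y)` is a continuous curve with
`0 < t(y) ≤ 2 (1 - y) / (4 + y)`, and these bounds alone force the polynomial for `β_g` to change
sign along the curve between `y = 0.4` and `y = 0.5`.
-/

section SmallerRoot

/-- The smaller root of `a x² - b x + c` for `a, b > 0`, with rationalized numerator: unlike
`(b - √Δ) / (2 a)`, this form makes the sign and the size of the root visible. -/
noncomputable def smallerRoot (a b c : ℝ) : ℝ := 2 * c / (b + √(discrim a b c))

variable {a b c : ℝ}

lemma add_sqrt_discrim_pos (hb : 0 < b) : 0 < b + √(discrim a b c) :=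
  add_pos_of_pos_of_nonneg hb (sqrt_nonneg _)

lemma smallerRoot_pos (hb : 0 < b) (hc : 0 < c) : 0 < smallerRoot a b c :=
  div_pos (by positivity) (add_sqrt_discrim_pos hb)

lemma smallerRoot_le (hb : 0 < b) (hc : 0 ≤ c) : smallerRoot a b c ≤ 2 * c / b :=
  div_le_div_of_nonneg_left (by positivity) hb (le_add_of_nonneg_right (sqrt_nonneg _))

lemma quadratic_smallerRoot_eq_zero (hb : 0 < b) (hdiscrim : 0 ≤ discrim a b c) :
    a * smallerRoot a b c ^ 2 - b * smallerRoot a b c + c = 0 := by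
  have hden : b + √(discrim a b c) ≠ 0 := (add_sqrt_discrim_pos hb).ne'
  have hsq : √(discrim a b c) ^ 2 = b ^ 2 - 4 * a * c := sq_sqrt hdiscrim
  rw [smallerRoot]
  field_simp
  linear_combination c * hsq

lemma continuousOn_smallerRoot {X : Type*} [TopologicalSpace X] {s : Set X} {a b c : X → ℝ}
    (ha : ContinuousOn a s) (hb : ContinuousOn b s) (hc : ContinuousOn c s)
    (hb_pos : ∀ x ∈ s, 0 < b x) :
    ContinuousOn (fun x ↦ smallerRoot (a x) (b x) (c x)) s := by
  unfold smallerRoot discrim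
  exact ContinuousOn.div (by fun_prop) (by fun_prop) fun x hx ↦
    (add_sqrt_discrim_pos (hb_pos x hx)).ne'

end SmallerRoot

section RescaledVariables

/-- The coupling `ḡ` in terms of `y = 1 + m̄²` and the rescaled coupling `t = π² ḡ / y²`. -/
noncomputable def couplingOfRescaled (t y : ℝ) : ℝ := t * y ^ 2 / π ^ 2

/-- The denominator of `η₀` in the rescaled variables, with the common factor `y⁴` removed. -/
noncomputable def etaDenom (t y : ℝ) : ℝ := 1 - t + (1 + y) * t ^ 2 / 3

/-- The polynomial whose zeros are those of `β_m` in the rescaled variables, arranged by powers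
of `t`. -/
noncomputable def betaMPoly (t y : ℝ) : ℝ :=
  (6 + 4 * y ^ 2) / 3 * t ^ 2 - (8 + 2 * y) * t + 2 * (1 - y)

/-- The polynomial whose zeros are the zeros of `β_g` with `ḡ ≠ 0` in the rescaled variables. -/
noncomputable def betaGPoly (t y : ℝ) : ℝ :=
  2 * y * (1 - t * (1 + y) / 2) - (1 - t / 3) * (1 - t / 2 * (1 + y + y ^ 2))

variable {t y : ℝ}

lemma pi_sq_mul_couplingOfRescaled (t y : ℝ) : π ^ 2 * couplingOfRescaled t y = t * y ^ 2 :=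
  mul_div_cancel₀ _ (by positivity)

lemma couplingOfRescaled_pos (ht : 0 < t) (hy : y ≠ 0) : 0 < couplingOfRescaled t y := by
  unfold couplingOfRescaled
  positivity

lemma couplingOfRescaled_lt (ht : 0 < t) (hy : y ≠ 0) :
    couplingOfRescaled t y < t * y ^ 2 / 9 := by
  have hpi : 9 < π ^ 2 := by nlinarith [pi_gt_three]
  exact div_lt_div_of_pos_left (by positivity) (by norm_num) hpi

lemma etaDenom_pos (hy : -1 / 4 < y) : 0 < etaDenom t y := by
  have h_one_add : 0 < 1 + y := by linarith
  have h_quarter_add : 0 < 1 / 4 + y := by linarith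
  have h_square : etaDenom t y =
      (1 + y) / 3 * (t - 3 / (2 * (1 + y))) ^ 2 + (1 / 4 + y) / (1 + y) := by
    rw [etaDenom]
    field_simp
    ring
  rw [h_square]
  positivity

lemma eta0_couplingOfRescaled (hy : y ≠ 0) :
    eta0 (couplingOfRescaled t y) (y - 1) =
      4 * t * (1 - t * (1 + y) / 2) / etaDenom t y := by
  rw [← mul_div_mul_left _ (etaDenom t y) (pow_ne_zero 4 hy)]
  unfold eta0 Omega etaDenom couplingOfRescaled
  congr 1 <;> (field_simp; ring)

lemma one_add_eta0_couplingOfRescaled_div_six (hy : y ≠ 0) (hD : etaDenom t y ≠ 0) :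
    1 + eta0 (couplingOfRescaled t y) (y - 1) / 6 = (1 - t / 3) / etaDenom t y := by
  rw [eta0_couplingOfRescaled hy]
  field_simp
  rw [etaDenom]
  ring

lemma betaM0_couplingOfRescaled (hy : y ≠ 0) (hD : etaDenom t y ≠ 0) :
    betaM0 (couplingOfRescaled t y) (y - 1) = betaMPoly t y / etaDenom t y := by
  rw [betaM0, one_add_eta0_couplingOfRescaled_div_six hy hD, eta0_couplingOfRescaled hy,
    mul_assoc 10, pi_sq_mul_couplingOfRescaled, add_sub_cancel]
  field_simp
  rw [etaDenom, betaMPoly]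
  ring

lemma betaG0_couplingOfRescaled (hy : y ≠ 0) (hD : etaDenom t y ≠ 0) :
    betaG0 (couplingOfRescaled t y) (y - 1) =
      -(4 * couplingOfRescaled t y * t / (y * etaDenom t y)) * betaGPoly t y := by
  have h_coupling_sq : 4 * couplingOfRescaled t y ^ 2 * π ^ 2 =
      4 * couplingOfRescaled t y * (t * y ^ 2) := by
    linear_combination 4 * couplingOfRescaled t y * pi_sq_mul_couplingOfRescaled t y
  rw [betaG0, one_add_eta0_couplingOfRescaled_div_six hy hD, eta0_couplingOfRescaled hy,
    h_coupling_sq, pi_sq_mul_couplingOfRescaled, add_sub_cancel, betaGPoly]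
  field_simp
  ring

end RescaledVariables

section BetaMRoot

/-- The branch `t(y)` of the curve `β_m = 0` that reaches zero coupling at `y = 1`. -/
noncomputable def betaMRoot (y : ℝ) : ℝ :=
  smallerRoot ((6 + 4 * y ^ 2) / 3) (8 + 2 * y) (2 * (1 - y))

variable {y : ℝ}

lemma betaMRoot_pos (hy₀ : -4 < y) (hy₁ : y < 1) : 0 < betaMRoot y :=
  smallerRoot_pos (by linarith) (by linarith)

lemma betaMRoot_le (hy₀ : -4 < y) (hy₁ : y ≤ 1) : betaMRoot y ≤ 2 * (1 - y) / (4 + y) := by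
  calc betaMRoot y ≤ 2 * (2 * (1 - y)) / (8 + 2 * y) :=
        smallerRoot_le (by linarith) (by linarith)
    _ = 2 * (1 - y) / (4 + y) := by
        rw [show 8 + 2 * y = 2 * (4 + y) by ring, mul_div_mul_left _ _ two_ne_zero]

lemma betaMRoot_le_three_div_eleven (hy₀ : 2 / 5 ≤ y) (hy₁ : y ≤ 1) :
    betaMRoot y ≤ 3 / 11 := by
  refine (betaMRoot_le (by linarith) hy₁).trans ?_
  rw [div_le_div_iff₀ (by linarith) (by norm_num)]
  linarith

lemma betaMPoly_betaMRoot (hy : 0 ≤ y) : betaMPoly (betaMRoot y) y = 0 := by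
  refine quadratic_smallerRoot_eq_zero (by linarith) ?_
  have h_discrim : discrim ((6 + 4 * y ^ 2) / 3) (8 + 2 * y) (2 * (1 - y)) =
      48 + 48 * y + 4 / 3 * y ^ 2 * (8 * y - 5) := by
    rw [discrim]
    ring
  rw [h_discrim]
  nlinarith [pow_nonneg hy 3, sq_nonneg (y - 1)]

lemma continuousOn_betaMRoot : ContinuousOn betaMRoot (Set.Ioi (-4)) :=
  continuousOn_smallerRoot (by fun_prop) (by fun_prop) (by fun_prop) fun y hy ↦ by
    linarith [Set.mem_Ioi.mp hy]

lemma betaGPoly_two_fifths_neg {t : ℝ} (ht : t ≤ 3 / 11) : betaGPoly t (2 / 5) < 0 := by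
  unfold betaGPoly
  nlinarith [sq_nonneg t]

lemma betaGPoly_half_pos {t : ℝ} (ht₀ : 0 < t) (ht₁ : t ≤ 1) : 0 < betaGPoly t (1 / 2) := by
  unfold betaGPoly
  nlinarith

lemma exists_betaGPoly_betaMRoot_eq_zero :
    ∃ y ∈ Set.Ioo (2 / 5 : ℝ) (1 / 2), betaGPoly (betaMRoot y) y = 0 := by
  have h_root : ContinuousOn betaMRoot (Set.Icc (2 / 5) (1 / 2)) :=
    continuousOn_betaMRoot.mono fun y hy ↦ lt_of_lt_of_le (by norm_num) hy.1
  have h_cont : ContinuousOn (fun y ↦ betaGPoly (betaMRoot y) y) (Set.Icc (2 / 5) (1 / 2)) := by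
    unfold betaGPoly
    fun_prop
  have h_left : betaGPoly (betaMRoot (2 / 5)) (2 / 5) < 0 :=
    betaGPoly_two_fifths_neg (betaMRoot_le_three_div_eleven le_rfl (by norm_num))
  have h_right : 0 < betaGPoly (betaMRoot (1 / 2)) (1 / 2) :=
    betaGPoly_half_pos (betaMRoot_pos (by norm_num) (by norm_num))
      ((betaMRoot_le_three_div_eleven (by norm_num) (by norm_num)).trans (by norm_num))
  exact intermediate_value_Ioo (by norm_num) h_cont ⟨h_left, h_right⟩

lemma couplingOfRescaled_betaMRoot_lt (hy₀ : 2 / 5 ≤ y) (hy₁ : y ≤ 1 / 2) :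
    couplingOfRescaled (betaMRoot y) y < 0.01 := by
  have ht : 0 < betaMRoot y := betaMRoot_pos (by linarith) (by linarith)
  calc couplingOfRescaled (betaMRoot y) y < betaMRoot y * y ^ 2 / 9 :=
        couplingOfRescaled_lt ht (by linarith)
    _ ≤ 3 / 11 * (1 / 2) ^ 2 / 9 := by
        gcongr
        exact betaMRoot_le_three_div_eleven hy₀ (by linarith)
    _ < 0.01 := by norm_num

end BetaMRoot

/-- The unconstrained melonic RG flow admits a non-Gaussian fixed point with
`0 < ḡ* < 0.01` and `−0.6 < m̄²* < −0.5` (numerically `(ḡ*, m̄²*) ≈ (0.003, −0.55)`). -/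
theorem unconstrained_nonGaussian_fixed_point :
    ∃ g m : ℝ, 0 < g ∧ g < 0.01 ∧ -0.6 < m ∧ m < -0.5 ∧
      betaM0 g m = 0 ∧ betaG0 g m = 0 := by
  obtain ⟨y, ⟨hy_lower, hy_upper⟩, h_betaG⟩ := exists_betaGPoly_betaMRoot_eq_zero
  have hy : y ≠ 0 := by linarith
  have hD : etaDenom (betaMRoot y) y ≠ 0 := (etaDenom_pos (by linarith)).ne'
  refine ⟨couplingOfRescaled (betaMRoot y) y, y - 1,
    couplingOfRescaled_pos (betaMRoot_pos (by linarith) (by linarith)) hy,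
    couplingOfRescaled_betaMRoot_lt hy_lower.le hy_upper.le,
    by norm_num; linarith, by norm_num; linarith, ?_, ?_⟩
  · rw [betaM0_couplingOfRescaled hy hD, betaMPoly_betaMRoot (by linarith), zero_div]
  · rw [betaG0_couplingOfRescaled hy hD, h_betaG, mul_zero]
end
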